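/- Suppose lim a_{n+1}/a_n = η ∈ (1, ∞). For any v̂ ∈ (0, η), dim_H({ξ : v̂_{b,A}(ξ) = v̂}) ≥ (η^{l̃+1} − 1 − η^{l̃} v̂) / ((η^{l̃+1} − 1)(1 + η^{l̃} v̂)), where l̃ = max{1, ⌊(log(η+1) − log(η−v̂))/log η⌋}. -/

import Mathlib

/-!
Let `l` be any exponent with `w * η ^ l < η ^ (l + 1) - 1`; the prescribed `l̃` is one. Select every
`(l + 1)`-st term of `a`, and consider the `ξ` whose base-`b` expansion has, starting at the `k`-th
selected term `a n_k`, a block of about `w * a (n_{k+1} - 1)` zeros. Outside these blocks, the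
digits at positions `0` and `1` modulo a large period `M` are fixed markers `0` and `1`, and the
remaining digits are free.

* The uniform exponent of such a `ξ` is exactly `w`. For `n_k ≤ N < n_{k+1}` the block starting at
  `a n_k` is long enough (`le_vhatbA`). Conversely, for `N = n_{k+1} - 1` no `n ≤ N` does better:
  the markers end every run of zeros or of digits `b - 1` starting at `a n` within `M` positions
  after `a n`, or after the end of the block containing `a n` (`dni_block_lower`, `vhatbA_le`).
* The dimension of the set of these `ξ` is at least the lower density of the free positions:
  reading off the free digits is a Hölder map onto the unit interval, the marker zeros ruling out
  carries (`dimH_prescribed`).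
* With `q = η ^ (l + 1)` and `c = w * η ^ l`, the block starting at `a n_k` ends near
  `(1 + c) * a n_k`, and the ends of blocks are where the density of free positions is lowest. It is
  `1 - (c + c / (q - 1)) / (1 + c) = (q - 1 - c) / ((q - 1) * (1 + c))` up to an error `ε` from the
  growth of `a` and the proportion `2 / M` of markers (`count_inBlock_le`, `exists_params`). Letting
  both tend to `0` gives the theorem.
-/

open Filter MeasureTheory Set

/-- Distance to the nearest integer. -/
noncomputable def dni (x : ℝ) : ℝ := |x - round x|

/-- Asymptotic approximation exponent `v_{b,A}(ξ)` (valued in `EReal`). -/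
noncomputable def vbA (b : ℕ) (a : ℕ → ℕ) (ξ : ℝ) : EReal :=
  sSup ((fun v : ℝ => (v : EReal)) ''
    {v : ℝ | 0 ≤ v ∧ ∃ᶠ n in atTop, 1 ≤ n ∧
      dni ((b : ℝ) ^ (a n) * ξ) < (b : ℝ) ^ (-(a n : ℝ) * v)})

/-- Uniform approximation exponent `v̂_{b,A}(ξ)` (valued in `EReal`). -/
noncomputable def vhatbA (b : ℕ) (a : ℕ → ℕ) (ξ : ℝ) : EReal :=
  sSup ((fun v : ℝ => (v : EReal)) ''
    {v : ℝ | 0 ≤ v ∧ ∀ᶠ N in atTop, ∃ n, 1 ≤ n ∧ n ≤ N ∧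
      dni ((b : ℝ) ^ (a n) * ξ) < (b : ℝ) ^ (-(a N : ℝ) * v)})

/-! ### Base-`b` expansions -/

lemma ofDigits_tail_lower {b : ℕ} (z : ℕ → Fin b) (p : ℕ) (hp : 1 ≤ (z p).val) :
    ((b : ℝ) ^ (p + 1))⁻¹ ≤ Real.ofDigits z := by
  have h1 : Real.ofDigitsTerm z p ≤ Real.ofDigits z :=
    Real.summable_ofDigitsTerm.le_tsum p (fun _ _ => Real.ofDigitsTerm_nonneg)
  refine le_trans ?_ h1
  unfold Real.ofDigitsTerm
  have : (1 : ℝ) ≤ (z p).val := by exact_mod_cast hp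
  exact le_mul_of_one_le_left (by positivity) this

/-- Complementing every digit turns `0.z₀z₁…` into `1 - 0.z₀z₁…`. -/
lemma ofDigits_add_rev {b : ℕ} (hb : 2 ≤ b) (z : ℕ → Fin b) :
    Real.ofDigits z + Real.ofDigits (fun i => Fin.rev (z i)) = 1 := by
  rw [← Real.ofDigits_const_last_eq_one' (b := b) (by omega)]
  unfold Real.ofDigits
  rw [← Real.summable_ofDigitsTerm.tsum_add Real.summable_ofDigitsTerm]
  congr 1
  ext i
  simp only [Real.ofDigitsTerm]
  rw [← add_mul]
  congr 1
  have := (z i).isLt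
  rw [← Nat.cast_add]
  congr 1
  rw [Fin.val_rev]
  omega

lemma ofDigits_tail_upper {b : ℕ} (hb : 2 ≤ b) (z : ℕ → Fin b) (p : ℕ)
    (hp : (z p).val + 1 < b) :
    Real.ofDigits z ≤ 1 - ((b : ℝ) ^ (p + 1))⁻¹ := by
  have h := ofDigits_add_rev hb z
  have h2 := ofDigits_tail_lower (fun i => Fin.rev (z i)) p (by rw [Fin.val_rev]; omega)
  linarith

lemma ofDigits_zeros {b : ℕ} (z : ℕ → Fin b) (m : ℕ) (hm : ∀ i < m, (z i).val = 0) :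
    Real.ofDigits z ≤ ((b : ℝ) ^ m)⁻¹ := by
  rw [Real.ofDigits_eq_sum_add_ofDigits z m]
  rw [Finset.sum_eq_zero]
  · rw [zero_add]
    exact mul_le_of_le_one_right (by positivity) (Real.ofDigits_le_one _)
  · intro i hi
    simp [Real.ofDigitsTerm, hm i (Finset.mem_range.mp hi)]

/-- Multiplication by `b ^ n` shifts the digits by `n`, up to an integer. -/
lemma pow_mul_ofDigits {b : ℕ} (hb : 2 ≤ b) (z : ℕ → Fin b) (n : ℕ) :
    ∃ k : ℤ, (b : ℝ) ^ n * Real.ofDigits z = k + Real.ofDigits (fun i => z (i + n)) := by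
  have hb0 : (b : ℝ) ≠ 0 := by positivity
  have key : ∃ k : ℤ, (b : ℝ) ^ n * ∑ i ∈ Finset.range n, Real.ofDigitsTerm z i = k := by
    induction n with
    | zero => exact ⟨0, by simp⟩
    | succ n ih =>
      obtain ⟨k, hk⟩ := ih
      refine ⟨b * k + (z n).val, ?_⟩
      rw [Finset.sum_range_succ, mul_add, pow_succ', mul_assoc, hk, Real.ofDigitsTerm]
      push_cast
      rw [pow_succ']
      field_simp
  obtain ⟨k, hk⟩ := key
  refine ⟨k, ?_⟩
  rw [Real.ofDigits_eq_sum_add_ofDigits z n, mul_add, hk]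
  field_simp

lemma dni_upper {b : ℕ} (hb : 2 ≤ b) (z : ℕ → Fin b) (n : ℕ) :
    dni ((b : ℝ) ^ n * Real.ofDigits z) ≤ Real.ofDigits (fun i => z (i + n)) := by
  obtain ⟨k, hk⟩ := pow_mul_ofDigits hb z n
  unfold dni
  refine (round_le _ k).trans ?_
  rw [hk, add_sub_cancel_left, abs_of_nonneg (Real.ofDigits_nonneg _)]

/-- If a nonzero digit and a digit smaller than `b - 1` both occur among the `m` digits following
the position `n`, then `b ^ n * ξ` is at distance at least `b ^ (-m)` from the integers. -/
lemma dni_lower {b : ℕ} (hb : 2 ≤ b) (z : ℕ → Fin b) (n m p p' : ℕ)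
    (hp : n ≤ p) (hpm : p < n + m) (hz : 1 ≤ (z p).val)
    (hp' : n ≤ p') (hpm' : p' < n + m) (hz' : (z p').val + 1 < b) :
    ((b : ℝ) ^ m)⁻¹ ≤ dni ((b : ℝ) ^ n * Real.ofDigits z) := by
  obtain ⟨k, hk⟩ := pow_mul_ofDigits hb z n
  have hb1 : (1 : ℝ) ≤ b := by exact_mod_cast (by omega : 1 ≤ b)
  have h1 := ofDigits_tail_lower (fun i => z (i + n)) (p - n) (by simpa [Nat.sub_add_cancel hp])
  have h2 := ofDigits_tail_upper hb (fun i => z (i + n)) (p' - n)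
    (by simpa [Nat.sub_add_cancel hp'])
  have h3 : ((b : ℝ) ^ m)⁻¹ ≤ ((b : ℝ) ^ (p - n + 1))⁻¹ := by
    gcongr
    omega
  have h4 : ((b : ℝ) ^ m)⁻¹ ≤ ((b : ℝ) ^ (p' - n + 1))⁻¹ := by
    gcongr
    omega
  unfold dni
  rw [hk]
  set t := Real.ofDigits (fun i => z (i + n))
  set r := round ((k : ℝ) + t)
  rcases le_or_gt r k with h | h
  · have : (r : ℝ) ≤ k := by exact_mod_cast h
    rw [abs_of_nonneg] <;> linarith [Real.ofDigits_nonneg (fun i => z (i + n))]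
  · have : (k : ℝ) + 1 ≤ r := by exact_mod_cast h
    rw [abs_sub_comm]
    refine le_trans ?_ (le_abs_self _)
    linarith

/-- Two expansions that first differ at the position `j` are well separated as soon as the smaller
one has a digit less than `b - 1` soon after `j`; this excludes the coincidence
`0.1000… = 0.0(b-1)(b-1)…`. -/
lemma ofDigits_sep {b : ℕ} (hb : 2 ≤ b) (x y : ℕ → Fin b) (j p : ℕ)
    (hxy : ∀ i < j, x i = y i) (hj : (y j).val < (x j).val) (hp : j < p)
    (hyp : (y p).val + 1 < b) :
    ((b : ℝ) ^ (p + 1))⁻¹ ≤ Real.ofDigits x - Real.ofDigits y := by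
  have hb0 : (b : ℝ) ≠ 0 := by positivity
  rw [Real.ofDigits_eq_sum_add_ofDigits x (j + 1), Real.ofDigits_eq_sum_add_ofDigits y (j + 1),
    Finset.sum_range_succ, Finset.sum_range_succ]
  have h1 : ∑ i ∈ Finset.range j, Real.ofDigitsTerm x i =
      ∑ i ∈ Finset.range j, Real.ofDigitsTerm y i :=
    Finset.sum_congr rfl fun i hi => by
      simp [Real.ofDigitsTerm, hxy i (Finset.mem_range.mp hi)]
  have h2 := ofDigits_tail_upper hb (fun i => y (i + (j + 1))) (p - (j + 1))
    (by simpa [Nat.sub_add_cancel (show j + 1 ≤ p from hp)])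
  have h3 := Real.ofDigits_nonneg (fun i => x (i + (j + 1)))
  have h4 : ((y j).val : ℝ) + 1 ≤ (x j).val := by exact_mod_cast hj
  have h5 : ((b : ℝ) ^ (p + 1))⁻¹ = ((b : ℝ) ^ (j + 1))⁻¹ * ((b : ℝ) ^ (p - (j + 1) + 1))⁻¹ := by
    rw [← mul_inv, ← pow_add]
    congr 2
    omega
  rw [h1, h5]
  simp only [Real.ofDigitsTerm]
  set B := ((b : ℝ) ^ (j + 1))⁻¹
  have hB : 0 ≤ B := by positivity
  nlinarith [mul_le_mul_of_nonneg_left h2 hB, mul_nonneg hB h3, mul_le_mul_of_nonneg_right h4 hB]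

/-! ### Hausdorff dimension of sets with prescribed digits -/

/-- An inverse Hölder estimate for `h` bounds the dimension of its image from below. -/
lemma dimH_le_of_inverse_holder (h : ℝ → ℝ) (S : Set ℝ) (K s : ℝ) (hs : 0 < s) (hK : 0 ≤ K)
    (hh : ∀ y ∈ S, ∀ y' ∈ S, |y - y'| ≤ K * |h y - h y'| ^ s) :
    dimH S ≤ dimH (h '' S) / (ENNReal.ofReal s) := by
  have hinj : Set.InjOn h S := by
    intro y hy y' hy' e
    have := hh y hy y' hy'
    rw [e, sub_self, abs_zero, Real.zero_rpow hs.ne', mul_zero] at this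
    exact sub_eq_zero.mp (abs_nonpos_iff.mp this)
  have hold : HolderOnWith K.toNNReal s.toNNReal (Function.invFunOn h S) (h '' S) := by
    rintro _ ⟨y, hy, rfl⟩ _ ⟨y', hy', rfl⟩
    rw [hinj.leftInvOn_invFunOn hy, hinj.leftInvOn_invFunOn hy', edist_dist, edist_dist,
      Real.dist_eq, Real.dist_eq, Real.coe_toNNReal s hs.le,
      ENNReal.ofReal_rpow_of_nonneg (abs_nonneg _) hs.le]
    change _ ≤ ENNReal.ofReal K * _
    rw [← ENNReal.ofReal_mul hK]
    exact ENNReal.ofReal_le_ofReal (hh y hy y' hy')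
  have := hold.dimH_image_le (by simpa using hs)
  rwa [hinj.invFunOn_image (Set.Subset.refl S)] at this

/-- Insert the digits `u` in the positions satisfying `P` and keep `d` in the other positions. -/
noncomputable def placeDigits {b : ℕ} (P : ℕ → Prop) [DecidablePred P] (d u : ℕ → Fin b) :
    ℕ → Fin b :=
  fun i => if P i then u (Nat.count P i) else d i

lemma placeDigits_sep {b : ℕ} (hb : 2 ≤ b) (P : ℕ → Prop) [DecidablePred P]
    (hP : (Set.ofPred P).Infinite) (d u u' : ℕ → Fin b) (M : ℕ)
    (hM : ∀ j, ∃ p, j < p ∧ p ≤ j + M ∧ ¬ P p ∧ (d p).val + 1 < b)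
    (j : ℕ) (huu : ∀ i < j, u i = u' i) (hj : (u' j).val < (u j).val) :
    ((b : ℝ) ^ (Nat.nth P j + M + 1))⁻¹ ≤
      |Real.ofDigits (placeDigits P d u) - Real.ofDigits (placeDigits P d u')| := by
  obtain ⟨p, hp1, hp2, hp3, hp4⟩ := hM (Nat.nth P j)
  have hb1 : (1 : ℝ) ≤ b := by exact_mod_cast (by omega : 1 ≤ b)
  have hmem := Nat.nth_mem_of_infinite hP j
  have hcount := Nat.count_nth_of_infinite hP j
  have := ofDigits_sep hb (placeDigits P d u) (placeDigits P d u') (Nat.nth P j) p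
    (by
      intro i hi
      unfold placeDigits
      split_ifs with h
      · refine huu _ ?_
        rw [← hcount]
        exact Nat.count_strict_mono h hi
      · rfl)
    (by simp only [placeDigits, if_pos hmem, hcount]; exact hj) hp1
    (by simp only [placeDigits, if_neg hp3]; exact hp4)
  refine le_trans ?_ (this.trans (le_abs_self _))
  gcongr

/-- If the positions in `P` have lower density at least `s` in the strong sense
`s * n - C ≤ #(P ∩ [0, n))`, then the reals whose digits outside `P` are prescribed by `d` form a
set of Hausdorff dimension at least `s`. Reading off the free digits is a Hölder map of exponent
`s` onto the unit interval; prescribed digits below `b - 1` in bounded gaps prevent carries. -/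
lemma dimH_prescribed {b : ℕ} (hb : 2 ≤ b) (P : ℕ → Prop) [DecidablePred P]
    (d : ℕ → Fin b) (M : ℕ)
    (hM : ∀ j, ∃ p, j < p ∧ p ≤ j + M ∧ ¬ P p ∧ (d p).val + 1 < b)
    (s C : ℝ) (hs : 0 < s) (hcount : ∀ n : ℕ, s * n - C ≤ Nat.count P n) :
    ENNReal.ofReal s ≤ dimH {ξ : ℝ | ∃ x : ℕ → Fin b, (∀ i, ¬ P i → x i = d i) ∧
      ξ = Real.ofDigits x} := by
  have : NeZero b := ⟨by omega⟩
  have hb0 : (0 : ℝ) < b := by positivity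
  have hb1 : (1 : ℝ) ≤ b := by exact_mod_cast (by omega : 1 ≤ b)
  have hP : (Set.ofPred P).Infinite := by
    intro hfin
    obtain ⟨n, hn⟩ := exists_nat_gt ((hfin.toFinset.card + C) / s)
    rw [div_lt_iff₀ hs] at hn
    have h1 : Nat.count P n ≤ hfin.toFinset.card := by
      rw [Nat.count_eq_card_filter_range]
      apply Finset.card_le_card
      intro i hi
      rw [Set.Finite.mem_toFinset]
      exact (Finset.mem_filter.mp hi).2
    have h2 : (Nat.count P n : ℝ) ≤ hfin.toFinset.card := by exact_mod_cast h1
    linarith [hcount n]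
  set h : ℝ → ℝ := fun y => Real.ofDigits (placeDigits P d (Real.digits y b)) with hh
  set K : ℝ := (b : ℝ) ^ (C + s * (M + 1)) with hK
  have key : ∀ y ∈ Set.Ico (0 : ℝ) 1, ∀ y' ∈ Set.Ico (0 : ℝ) 1,
      |y - y'| ≤ K * |h y - h y'| ^ s := by
    intro y hy y' hy'
    by_cases he : Real.digits y b = Real.digits y' b
    · have : y = y' := by
        rw [← Real.ofDigits_digits (b := b) (by omega) hy, he,
          Real.ofDigits_digits (b := b) (by omega) hy']
      rw [this, sub_self, abs_zero]
      positivity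
    · have hne : ∃ j, Real.digits y b j ≠ Real.digits y' b j := Function.ne_iff.mp he
      classical
      set j := Nat.find hne with hj
      have hjs : Real.digits y b j ≠ Real.digits y' b j := Nat.find_spec hne
      have hlt : ∀ i < j, Real.digits y b i = Real.digits y' b i := fun i hi => by
        by_contra hc
        exact Nat.find_min hne hi hc
      have hup : |y - y'| ≤ ((b : ℝ) ^ j)⁻¹ := by
        have := Real.abs_ofDigits_sub_ofDigits_le hlt
        rwa [Real.ofDigits_digits (by omega) hy, Real.ofDigits_digits (by omega) hy'] at this
      have hlow : ((b : ℝ) ^ (Nat.nth P j + M + 1))⁻¹ ≤ |h y - h y'| := by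
        rcases lt_or_gt_of_ne (fun e => hjs (Fin.ext e)) with hl | hl
        · rw [abs_sub_comm]
          exact placeDigits_sep hb P hP d _ _ M hM j (fun i hi => (hlt i hi).symm) hl
        · exact placeDigits_sep hb P hP d _ _ M hM j hlt hl
      have hc := hcount (Nat.nth P j)
      rw [Nat.count_nth_of_infinite hP j] at hc
      calc |y - y'| ≤ ((b : ℝ) ^ j)⁻¹ := hup
        _ ≤ K * (((b : ℝ) ^ (Nat.nth P j + M + 1))⁻¹) ^ s := by
            rw [hK, ← Real.rpow_natCast, ← Real.rpow_natCast, ← Real.rpow_neg hb0.le,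
              ← Real.rpow_neg hb0.le, ← Real.rpow_mul hb0.le, ← Real.rpow_add hb0]
            apply Real.rpow_le_rpow_of_exponent_le hb1
            push_cast
            linarith
        _ ≤ K * |h y - h y'| ^ s := by gcongr
  have hdim := dimH_le_of_inverse_holder h (Set.Ico 0 1) K s hs (by positivity) key
  have hone : dimH (Set.Ico (0 : ℝ) 1) = 1 := by
    rw [Real.dimH_of_nonempty_interior]
    · simp
    · rw [interior_Ico]
      exact ⟨1 / 2, by norm_num, by norm_num⟩
  rw [hone, ENNReal.le_div_iff_mul_le (Or.inl (by simpa using hs)) (Or.inl ENNReal.ofReal_ne_top),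
    one_mul] at hdim
  refine hdim.trans (dimH_mono ?_)
  rintro _ ⟨y, -, rfl⟩
  exact ⟨placeDigits P d (Real.digits y b), fun i hi => by simp [placeDigits, hi], rfl⟩

/-! ### Counting free positions -/

/-- The position `i` lies in one of the blocks `[A k, E k)`. -/
def InBlock (A E : ℕ → ℕ) (i : ℕ) : Prop := ∃ k, A k ≤ i ∧ i < E k

lemma count_le_count_add (p : ℕ → Prop) [DecidablePred p] (m n : ℕ) (h : m ≤ n) :
    (Nat.count p n : ℝ) ≤ Nat.count p m + (n - m) := by
  induction n, h using Nat.le_induction with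
  | base => simp
  | succ n hn ih =>
    rw [Nat.count_succ]
    push_cast
    split_ifs <;> linarith

lemma count_eq_of_forall_not (p : ℕ → Prop) [DecidablePred p] (m n : ℕ) (h : m ≤ n)
    (hp : ∀ i, m ≤ i → i < n → ¬ p i) : Nat.count p n = Nat.count p m := by
  induction n, h using Nat.le_induction with
  | base => rfl
  | succ n hn ih =>
    rw [Nat.count_succ, if_neg (hp n hn (by omega)), add_zero]
    exact ih fun i h1 h2 => hp i h1 (by omega)

lemma not_inBlock_of_gap (A E : ℕ → ℕ) (hA : Monotone A) (hE : Monotone E) (k i : ℕ)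
    (h1 : E k ≤ i) (h2 : i < A (k + 1)) : ¬ InBlock A E i := by
  rintro ⟨k', h3, h4⟩
  rcases le_or_gt k' k with h | h
  · have := hE h
    omega
  · have := hA (show k + 1 ≤ k' from h)
    omega

/-- For blocks `[A k, E k)` with `E k ≤ (1 + c) A k` and `A (k + 1) ≥ q A k`, the proportion of the
positions before `A k` lying in blocks is at most `α ≈ c / (q - 1)`. The proportion is largest at
the end of a block, where it is at most `t ≈ (c + α) / (1 + c)`. -/
lemma count_inBlock_le (A E : ℕ → ℕ) [DecidablePred (InBlock A E)] (hA : StrictMono A)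
    (hE : Monotone E) (hEA : ∀ k, E k ≤ A (k + 1)) (hAE : ∀ k, A k ≤ E k)
    (α q c t : ℝ) (hα : 0 ≤ α) (ht : t ≤ 1) (ht0 : 0 ≤ t)
    (hc : ∀ k, (E k : ℝ) ≤ (1 + c) * A k) (hq : ∀ k, q * (A k : ℝ) ≤ A (k + 1))
    (h1 : α + c ≤ α * q) (h2 : (1 - t) * (1 + c) ≤ 1 - α) (n : ℕ) :
    (Nat.count (InBlock A E) n : ℝ) ≤ t * n := by
  have h0 : ∀ n ≤ A 0, Nat.count (InBlock A E) n = 0 := by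
    intro n hn
    rw [count_eq_of_forall_not _ 0 n (Nat.zero_le _), Nat.count_zero]
    rintro i - hi ⟨k, hk, -⟩
    have := hA.monotone (Nat.zero_le k)
    omega
  have hgap : ∀ k n, E k ≤ n → n ≤ A (k + 1) →
      Nat.count (InBlock A E) n = Nat.count (InBlock A E) (E k) := by
    intro k n h3 h4
    refine count_eq_of_forall_not _ _ _ h3 fun i h5 h6 => ?_
    exact not_inBlock_of_gap A E hA.monotone hE k i h5 (by omega)
  have hAk : ∀ k, (Nat.count (InBlock A E) (A k) : ℝ) ≤ α * A k := by
    intro k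
    induction k with
    | zero => rw [h0 _ le_rfl]; simp only [Nat.cast_zero]; positivity
    | succ k ih =>
      rw [hgap k _ (hEA k) le_rfl]
      have h3 := count_le_count_add (InBlock A E) _ _ (hAE k)
      have h4 := mul_le_mul_of_nonneg_left (hq k) hα
      have h5 := mul_le_mul_of_nonneg_right h1 (Nat.cast_nonneg (α := ℝ) (A k))
      have h6 := hc k
      nlinarith
  have hin : ∀ k n, A k ≤ n → n ≤ E k → (Nat.count (InBlock A E) n : ℝ) ≤ t * n := by
    intro k n h3 h4
    have h5 := count_le_count_add (InBlock A E) _ _ h3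
    have h6 : (n : ℝ) ≤ (1 + c) * A k := le_trans (by exact_mod_cast h4) (hc k)
    have h7 := mul_le_mul_of_nonneg_left h6 (sub_nonneg.mpr ht)
    have h8 := mul_le_mul_of_nonneg_right h2 (Nat.cast_nonneg (α := ℝ) (A k))
    have h9 := hAk k
    nlinarith
  rcases le_or_gt n (A 0) with h | h
  · rw [h0 n h]; simp only [Nat.cast_zero]; positivity
  · have hex : ∃ k, A k ≤ n ∧ n < A (k + 1) := by
      have hfin : ∃ k, n < A (k + 1) := ⟨n, lt_of_lt_of_le (Nat.lt_succ_self n) hA.le_apply⟩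
      classical
      refine ⟨Nat.find hfin, ?_, Nat.find_spec hfin⟩
      rcases Nat.eq_zero_or_pos (Nat.find hfin) with h' | h'
      · rw [h']; exact h.le
      · have := Nat.find_min hfin (Nat.sub_lt h' one_pos)
        rw [Nat.sub_add_cancel (show 1 ≤ _ from h')] at this
        omega
    obtain ⟨k, hk1, hk2⟩ := hex
    rcases le_or_gt n (E k) with h' | h'
    · exact hin k n hk1 h'
    · rw [hgap k n h'.le hk2.le]
      refine (hin k (E k) (hAE k) le_rfl).trans ?_
      gcongr

lemma count_marker_le (M n : ℕ) (hM : 2 ≤ M) :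
    (Nat.count (fun i => i % M < 2) n : ℝ) ≤ 2 / M * n + 2 := by
  have hM0 : (0 : ℝ) < M := by positivity
  have key : ∀ n, Nat.count (fun i => i % M < 2) n ≤
      Nat.count (· ≡ 0 [MOD M]) n + Nat.count (· ≡ 1 [MOD M]) n := by
    intro n
    induction n with
    | zero => simp
    | succ n ih =>
      have z : n ≡ 0 [MOD M] ↔ n % M = 0 := by simp [Nat.ModEq]
      have o : n ≡ 1 [MOD M] ↔ n % M = 1 := by
        simp [Nat.ModEq, Nat.mod_eq_of_lt (show 1 < M by omega)]
      rw [Nat.count_succ, Nat.count_succ, Nat.count_succ]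
      simp only [z, o]
      split_ifs <;> omega
  have h1 := key n
  rw [Nat.count_modEq_card _ (by omega), Nat.count_modEq_card _ (by omega)] at h1
  have h2 : Nat.count (fun i => i % M < 2) n ≤ 2 * (n / M) + 2 := by
    refine h1.trans ?_
    split_ifs <;> omega
  have h3 : ((n / M : ℕ) : ℝ) ≤ n / M := Nat.cast_div_le
  calc (Nat.count (fun i => i % M < 2) n : ℝ) ≤ 2 * ((n / M : ℕ) : ℝ) + 2 := by exact_mod_cast h2
    _ ≤ 2 * (n / M) + 2 := by gcongr
    _ = _ := by ring

/-- The position `i` is free: outside the blocks and not one of the two markers in its period. -/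
def FreePos (A E : ℕ → ℕ) (M : ℕ) (i : ℕ) : Prop := ¬ InBlock A E i ∧ 2 ≤ i % M

lemma count_freePos (A E : ℕ → ℕ) (M : ℕ) [DecidablePred (InBlock A E)]
    [DecidablePred (FreePos A E M)] (n : ℕ) :
    n ≤ Nat.count (FreePos A E M) n + Nat.count (InBlock A E) n +
      Nat.count (fun i => i % M < 2) n := by
  induction n with
  | zero => simp
  | succ n ih =>
    simp only [Nat.count_succ]
    by_cases h1 : InBlock A E n
    · rw [if_pos h1]; omega
    · by_cases h2 : n % M < 2
      · rw [if_pos h2]; omega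
      · rw [if_pos (show FreePos A E M n from ⟨h1, by omega⟩)]; omega

/-! ### Choice of parameters -/

/-- With `q = η ^ (l + 1)` and `c = w * η ^ l`, every `s` below the claimed dimension is reached by
parameters that leave room for an error `ε` in the growth rates and a marker period `M`. -/
lemma exists_params (q c s : ℝ) (hc : 0 < c) (hcq : c < q - 1)
    (hs : s < (q - 1 - c) / ((q - 1) * (1 + c))) :
    ∃ ε > 0, ∃ α t : ℝ, ∃ M : ℕ, 3 ≤ M ∧ 0 ≤ α ∧ 0 ≤ t ∧ t ≤ 1 ∧
      α + (c + ε) ≤ α * (q - ε) ∧ (1 - t) * (1 + (c + ε)) ≤ 1 - α ∧ s ≤ 1 - t - 2 / M := by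
  set f : ℝ → ℝ := fun ε => (1 - (c + ε) / (q - ε - 1)) / (1 + (c + ε)) with hf
  have hf0 : f 0 = (q - 1 - c) / ((q - 1) * (1 + c)) := by
    have h1 : q - 1 ≠ 0 := by linarith
    have h2 : 1 + c ≠ 0 := by linarith
    simp only [hf, add_zero, sub_zero]
    field_simp
  have hcont : ContinuousAt f 0 := by
    have h1 : q - 0 - 1 ≠ 0 := by linarith
    have h2 : 1 + (c + 0) ≠ 0 := by linarith
    fun_prop (disch := assumption)
  have hpos : 0 < f 0 := by
    rw [hf0]
    have : 0 < q - 1 - c := by linarith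
    have : 0 < q - 1 := by linarith
    positivity
  have e1 : ∀ᶠ ε in nhds (0 : ℝ), s < f ε := hcont.eventually (lt_mem_nhds (by rwa [hf0]))
  have e2 : ∀ᶠ ε in nhds (0 : ℝ), 0 < f ε := hcont.eventually (lt_mem_nhds hpos)
  have e3 : ∀ᶠ ε in nhds (0 : ℝ), ε < q - 1 := gt_mem_nhds (by linarith)
  have e4 : ∀ᶠ ε in nhdsWithin (0 : ℝ) (Set.Ioi 0), 0 < ε := self_mem_nhdsWithin
  obtain ⟨ε, ⟨⟨h1, h2⟩, h3⟩, h4⟩ :=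
    ((((e1.and e2).and e3).filter_mono nhdsWithin_le_nhds).and e4).exists
  obtain ⟨M, hM⟩ := exists_nat_gt (max 3 (2 / (f ε - s)))
  have hM3 : (3 : ℝ) < M := (le_max_left _ _).trans_lt hM
  have hM2 : 2 / (f ε - s) < M := (le_max_right _ _).trans_lt hM
  have hq : 0 < q - ε - 1 := by linarith
  have hc1 : 0 < 1 + (c + ε) := by linarith
  have hfe : f ε * (1 + (c + ε)) = 1 - (c + ε) / (q - ε - 1) := by
    simp only [hf]
    field_simp
  have hα : 0 < (c + ε) / (q - ε - 1) := by positivity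
  refine ⟨ε, h4, (c + ε) / (q - ε - 1), 1 - f ε, M, by exact_mod_cast hM3.le, hα.le, ?_,
    by linarith, ?_, ?_, ?_⟩
  · by_contra hcon
    have : 1 < f ε := by linarith
    nlinarith
  · apply le_of_eq
    field_simp
    ring
  · rw [sub_sub_cancel, hfe]
  · rw [div_lt_iff₀ (by linarith)] at hM2
    have : 2 / (M : ℝ) ≤ f ε - s := by
      rw [div_le_iff₀ (by linarith)]
      linarith
    linarith

lemma tendsto_ratio (a : ℕ → ℕ) (hpos : ∀ n, 1 ≤ a n) (η : ℝ)
    (hη : Tendsto (fun n => (a (n + 1) : ℝ) / (a n : ℝ)) atTop (nhds η)) (j : ℕ) :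
    Tendsto (fun n => (a (n + j) : ℝ) / (a n : ℝ)) atTop (nhds (η ^ j)) := by
  induction j with
  | zero =>
    have : (fun n => (a (n + 0) : ℝ) / (a n : ℝ)) = fun _ => 1 := by
      ext n
      have : (0 : ℝ) < a n := by exact_mod_cast hpos n
      simp [this.ne']
    rw [this, pow_zero]
    exact tendsto_const_nhds
  | succ j ih =>
    have h1 := (hη.comp (tendsto_add_atTop_nat j)).mul ih
    rw [pow_succ']
    refine h1.congr fun n => ?_
    have h2 : (0 : ℝ) < a (n + j) := by exact_mod_cast hpos _
    simp only [Function.comp]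
    rw [div_mul_div_cancel₀ h2.ne', add_assoc]

/-- A sequence asymptotic to a positive multiple of a divergent one exceeds every constant. -/
lemma eventually_add_const_le (a g : ℕ → ℝ) (ha : Tendsto a atTop atTop) (r K : ℝ) (hr : 0 < r)
    (hg : Tendsto (fun n => g n / a n) atTop (nhds r)) : ∀ᶠ n in atTop, K ≤ g n := by
  filter_upwards [hg.eventually (lt_mem_nhds (show r / 2 < r by linarith)),
    ha.eventually_gt_atTop 0, ha.eventually_ge_atTop (K / (r / 2))] with n h1 h2 h3
  rw [lt_div_iff₀ h2] at h1
  rw [div_le_iff₀ (by linarith)] at h3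
  linarith

lemma eventually_growth (a : ℕ → ℕ) (ha : StrictMono a) (hpos : ∀ n, 1 ≤ a n) (η : ℝ)
    (hη1 : 1 < η)
    (hη : Tendsto (fun n => (a (n + 1) : ℝ) / (a n : ℝ)) atTop (nhds η))
    (w : ℝ) (l M : ℕ) (hl : w * η ^ l < η ^ (l + 1) - 1) (ε : ℝ) (hε : 0 < ε) :
    ∀ᶠ n in atTop, w * a (n + l) + 1 ≤ (w * η ^ l + ε) * a n ∧
      (η ^ (l + 1) - ε) * a n ≤ a (n + (l + 1)) ∧
      (a n : ℝ) + w * a (n + l) + (M + 2) ≤ a (n + (l + 1)) ∧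
      (a n : ℝ) + (M + 1) ≤ a (n + 1) := by
  have hat : Tendsto (fun n => (a n : ℝ)) atTop atTop :=
    tendsto_natCast_atTop_atTop.comp ha.tendsto_atTop
  have hp : ∀ n, (a n : ℝ) ≠ 0 := fun n => by
    have := hpos n
    positivity
  have t0 := tendsto_const_nhds (x := (1 : ℝ)) (f := atTop (α := ℕ))
  have t1 := (tendsto_ratio a hpos η hη l).const_mul w
  have t2 := tendsto_ratio a hpos η hη (l + 1)
  have e1 := eventually_add_const_le (fun n => (a n : ℝ))
    (fun n => (w * η ^ l + ε) * a n - w * a (n + l)) hat ε 1 hε (by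
      have := (t0.mul_const (w * η ^ l + ε)).sub t1
      convert this using 2
      · have := hp ‹_›
        field_simp
      · ring)
  have e2 := eventually_add_const_le (fun n => (a n : ℝ))
    (fun n => a (n + (l + 1)) - (η ^ (l + 1) - ε) * a n) hat ε 0 hε (by
      have := t2.sub (t0.mul_const (η ^ (l + 1) - ε))
      convert this using 2
      · have := hp ‹_›
        field_simp
      · ring)
  have e3 := eventually_add_const_le (fun n => (a n : ℝ))
    (fun n => a (n + (l + 1)) - a n - w * a (n + l)) hat (η ^ (l + 1) - 1 - w * η ^ l) (M + 2)
    (by linarith) (by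
      have := (t2.sub t0).sub t1
      convert this using 2
      have := hp ‹_›
      field_simp)
  have e4 := eventually_add_const_le (fun n => (a n : ℝ))
    (fun n => a (n + 1) - a n) hat (η - 1) (M + 1) (by linarith) (by
      have := hη.sub t0
      convert this using 2
      have := hp ‹_›
      field_simp)
  filter_upwards [e1, e2, e3, e4] with n h1 h2 h3 h4
  exact ⟨by linarith, by linarith, by linarith, by linarith⟩

/-! ### The uniform exponent of the constructed numbers -/

lemma exists_mod_eq (M r s : ℕ) (hr : r < M) : ∃ i, s ≤ i ∧ i < s + M ∧ i % M = r := by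
  have hM : 0 < M := by omega
  have h1 := Nat.div_add_mod s M
  have h2 := Nat.mod_lt s hM
  rcases le_or_gt (s % M) r with h | h
  · exact ⟨M * (s / M) + r, by omega, by omega, by simp [Nat.mod_eq_of_lt hr]⟩
  · refine ⟨M * (s / M + 1) + r, ?_, ?_, by simp [Nat.mod_eq_of_lt hr]⟩ <;>
      rw [Nat.mul_add, mul_one] <;> omega

/-- The start `a (n₀ + k (l + 1))` of the `k`-th block of zeros. -/
def blockStart (a : ℕ → ℕ) (n0 l k : ℕ) : ℕ := a (n0 + k * (l + 1))

/-- The end of the `k`-th block of zeros. The length is `w` times the last term of `a` preceding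
the next block, rounded up. -/
noncomputable def blockEnd (a : ℕ → ℕ) (w : ℝ) (n0 l k : ℕ) : ℕ :=
  a (n0 + k * (l + 1)) + ⌈w * a (n0 + k * (l + 1) + l)⌉₊

lemma dni_block_lower {b : ℕ} (hb : 2 ≤ b) (a : ℕ → ℕ) (ha : StrictMono a) (w : ℝ) (hw : 0 ≤ w)
    (n0 l M : ℕ) (hM : 3 ≤ M)
    (h3 : ∀ k, blockEnd a w n0 l k + M ≤ blockStart a n0 l (k + 1))
    (h4 : ∀ n ≥ n0, a n + M ≤ a (n + 1)) (x : ℕ → Fin b)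
    (hx0 : ∀ i, i % M = 0 → (x i).val = 0)
    (hx1 : ∀ i, i % M = 1 → ¬ InBlock (blockStart a n0 l) (blockEnd a w n0 l) i → (x i).val = 1)
    (n k : ℕ) (hn : n0 ≤ n) (hnk : n ≤ n0 + k * (l + 1) + l) :
    ((b : ℝ) ^ (⌈w * a (n0 + k * (l + 1) + l)⌉₊ + M))⁻¹ ≤
      dni ((b : ℝ) ^ (a n) * Real.ofDigits x) := by
  set j := (n - n0) / (l + 1) with hj
  have hdm := Nat.div_add_mod (n - n0) (l + 1)
  have hml := Nat.mod_lt (n - n0) (show 0 < l + 1 by omega)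
  rw [← hj, mul_comm] at hdm
  have hjk : j ≤ k := by
    have : j < k + 1 := by
      rw [hj, Nat.div_lt_iff_lt_mul (by omega), add_mul, one_mul]
      omega
    omega
  have hsucc : ∀ k, n0 + (k + 1) * (l + 1) = n0 + k * (l + 1) + (l + 1) := fun k => by ring
  have hA : Monotone (blockStart a n0 l) := fun i j hij => by
    unfold blockStart
    exact ha.monotone (by gcongr)
  have hE : Monotone (blockEnd a w n0 l) := fun i j hij => by
    unfold blockEnd
    have h5 : a (n0 + i * (l + 1)) ≤ a (n0 + j * (l + 1)) := ha.monotone (by gcongr)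
    have h6 : a (n0 + i * (l + 1) + l) ≤ a (n0 + j * (l + 1) + l) := ha.monotone (by gcongr)
    gcongr
  have hWj : ⌈w * a (n0 + j * (l + 1) + l)⌉₊ ≤ ⌈w * a (n0 + k * (l + 1) + l)⌉₊ := by
    have h6 : a (n0 + j * (l + 1) + l) ≤ a (n0 + k * (l + 1) + l) := ha.monotone (by gcongr)
    gcongr
  have hAj : a (n0 + j * (l + 1)) ≤ a n := ha.monotone (by omega)
  have hnext : a (n + 1) ≤ blockStart a n0 l (j + 1) := by
    unfold blockStart
    rw [hsucc]
    exact ha.monotone (by omega)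
  have hgap := h3 j
  have hn1 := h4 n hn
  -- The marker digit `1` following both `a n` and the end of the current block is not masked.
  obtain ⟨p, hp1, hp2, hp3⟩ := exists_mod_eq M 1 (max (a n) (blockEnd a w n0 l j)) (by omega)
  obtain ⟨p', hp1', hp2', hp3'⟩ := exists_mod_eq M 0 (a n) (by omega)
  have hpB : ¬ InBlock (blockStart a n0 l) (blockEnd a w n0 l) p :=
    not_inBlock_of_gap _ _ hA hE j p (by omega) (by omega)
  have hend : blockEnd a w n0 l j =
    a (n0 + j * (l + 1)) + ⌈w * a (n0 + j * (l + 1) + l)⌉₊ := rfl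
  refine dni_lower hb x (a n) _ p p' (by omega) (by omega) (by rw [hx1 p hp3 hpB]) hp1' (by omega)
    (by rw [hx0 p' hp3']; omega)

lemma le_vhatbA {b : ℕ} (hb : 2 ≤ b) (a : ℕ → ℕ) (ha : StrictMono a) (hpos : ∀ n, 1 ≤ a n)
    (w : ℝ) (hw : 0 < w) (n0 l : ℕ) (hn0 : 1 ≤ n0) (x : ℕ → Fin b)
    (hx : ∀ i, InBlock (blockStart a n0 l) (blockEnd a w n0 l) i → (x i).val = 0) :
    (w : EReal) ≤ vhatbA b a (Real.ofDigits x) := by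
  have hb1 : (1 : ℝ) < b := by exact_mod_cast (by omega : 1 < b)
  have key : ∀ v : ℝ, 0 ≤ v → v < w → (v : EReal) ≤ vhatbA b a (Real.ofDigits x) := by
    intro v hv hvw
    apply le_sSup
    refine ⟨v, ⟨hv, ?_⟩, rfl⟩
    filter_upwards [eventually_ge_atTop n0] with N hN
    set k := (N - n0) / (l + 1) with hk
    have hdm := Nat.div_add_mod (N - n0) (l + 1)
    have hml := Nat.mod_lt (N - n0) (show 0 < l + 1 by omega)
    rw [← hk, mul_comm] at hdm
    refine ⟨n0 + k * (l + 1), by omega, by omega, ?_⟩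
    have h1 := dni_upper hb x (a (n0 + k * (l + 1)))
    have h2 := ofDigits_zeros (fun i => x (i + a (n0 + k * (l + 1))))
      ⌈w * a (n0 + k * (l + 1) + l)⌉₊ (fun i hi => hx _ ⟨k, by
        unfold blockStart blockEnd
        omega⟩)
    refine (h1.trans h2).trans_lt ?_
    rw [← Real.rpow_natCast, ← Real.rpow_neg (by positivity)]
    apply Real.rpow_lt_rpow_of_exponent_lt hb1
    have h3 : (a N : ℝ) ≤ a (n0 + k * (l + 1) + l) := by
      exact_mod_cast ha.monotone (by omega)
    have h4 := Nat.le_ceil (w * (a (n0 + k * (l + 1) + l) : ℝ))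
    have h5 : (1 : ℝ) ≤ a N := by exact_mod_cast hpos N
    nlinarith
  refine le_of_forall_lt fun c hc => ?_
  obtain ⟨r, hr1, hr2⟩ := EReal.lt_iff_exists_real_btwn.mp hc
  refine hr1.trans_le (le_trans ?_ (key (max r 0) (le_max_right _ _)
    (max_lt (by exact_mod_cast hr2) hw)))
  exact_mod_cast le_max_left r 0

lemma vhatbA_le {b : ℕ} (hb : 2 ≤ b) (a : ℕ → ℕ) (ha : StrictMono a)
    (w : ℝ) (hw : 0 < w) (n0 l M : ℕ) (hM : 3 ≤ M)
    (h3 : ∀ k, blockEnd a w n0 l k + M ≤ blockStart a n0 l (k + 1))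
    (h4 : ∀ n ≥ n0, a n + M ≤ a (n + 1)) (x : ℕ → Fin b)
    (hx0 : ∀ i, i % M = 0 → (x i).val = 0)
    (hx1 : ∀ i, i % M = 1 → ¬ InBlock (blockStart a n0 l) (blockEnd a w n0 l) i → (x i).val = 1) :
    vhatbA b a (Real.ofDigits x) ≤ w := by
  have hb0 : (0 : ℝ) < b := by positivity
  have hb1 : (1 : ℝ) < b := by exact_mod_cast (by omega : 1 < b)
  set ξ := Real.ofDigits x with hξ
  have hlow : ∀ n k, n0 ≤ n → n ≤ n0 + k * (l + 1) + l → _ :=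
    fun n k => dni_block_lower hb a ha w hw.le n0 l M hM h3 h4 x hx0 hx1 n k
  -- No `b ^ a n * ξ` is an integer, since otherwise all later multiples would be integers too.
  have hdpos : ∀ n, 0 < dni ((b : ℝ) ^ (a n) * ξ) := by
    intro n
    refine lt_of_le_of_ne (abs_nonneg _) fun h0 => ?_
    have h1 : (b : ℝ) ^ (a n) * ξ = round ((b : ℝ) ^ (a n) * ξ) := by
      unfold dni at h0
      exact sub_eq_zero.mp (abs_eq_zero.mp h0.symm)
    have h2 := hlow (n0 + (n + 1) * (l + 1)) (n + 1) (by omega) (by omega)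
    have h5 : n ≤ n0 + (n + 1) * (l + 1) := by nlinarith
    have h6 : (b : ℝ) ^ (a (n0 + (n + 1) * (l + 1))) * ξ =
        (((b : ℤ) ^ (a (n0 + (n + 1) * (l + 1)) - a n) * round ((b : ℝ) ^ (a n) * ξ) : ℤ) : ℝ) := by
      push_cast
      rw [← h1, ← mul_assoc, ← pow_add, Nat.sub_add_cancel (ha.monotone h5)]
    rw [← hξ, h6] at h2
    unfold dni at h2
    rw [round_intCast, sub_self, abs_zero] at h2
    exact absurd h2 (not_le.mpr (by positivity))
  obtain ⟨c0, hc0, hc0'⟩ : ∃ c0 > 0, ∀ n ≤ n0, c0 ≤ dni ((b : ℝ) ^ (a n) * ξ) := by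
    obtain ⟨m, -, hm⟩ := Finset.exists_min_image (Finset.range (n0 + 1))
      (fun n => dni ((b : ℝ) ^ (a n) * ξ)) ⟨0, by simp⟩
    exact ⟨_, hdpos m, fun n hn => hm n (by simp; omega)⟩
  apply sSup_le
  rintro _ ⟨v, ⟨hv0, hv⟩, rfl⟩
  by_contra hcon
  have hvw : w < v := EReal.coe_lt_coe_iff.mp (not_le.mp hcon)
  have hN : Tendsto (fun k => n0 + k * (l + 1) + l) atTop atTop :=
    tendsto_atTop_mono (fun k => by simp only [id]; nlinarith) tendsto_id
  have haN : Tendsto (fun k => (a (n0 + k * (l + 1) + l) : ℝ)) atTop atTop :=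
    tendsto_natCast_atTop_atTop.comp (ha.tendsto_atTop.comp hN)
  have hsmall : Tendsto (fun k => (b : ℝ) ^ (-(a (n0 + k * (l + 1) + l) : ℝ) * v)) atTop
      (nhds 0) := by
    have h1 : Tendsto (fun k => (a (n0 + k * (l + 1) + l) : ℝ) * v) atTop atTop :=
      haN.atTop_mul_const (hw.trans hvw)
    refine ((tendsto_rpow_atBot_of_base_gt_one (b : ℝ) hb1).comp
      (tendsto_neg_atTop_atBot.comp h1)).congr fun k => ?_
    simp [Function.comp]
  obtain ⟨k, ⟨hk1, hk2⟩, hk3⟩ := (((hN.eventually hv).and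
    (haN.eventually_ge_atTop ((M + 1) / (v - w)))).and
    (hsmall.eventually (gt_mem_nhds hc0))).exists
  obtain ⟨n, hn1, hn2, hn3⟩ := hk1
  rcases le_or_gt n n0 with h | h
  · linarith [hc0' n h]
  · have h1 := hlow n k h.le hn2
    rw [← hξ] at h1
    have h2 := h1.trans_lt hn3
    rw [← Real.rpow_natCast, ← Real.rpow_neg hb0.le, Real.rpow_lt_rpow_left_iff hb1] at h2
    push_cast at h2
    rw [div_le_iff₀ (by linarith)] at hk2
    have h5 := Nat.ceil_lt_add_one (a := w * (a (n0 + k * (l + 1) + l) : ℝ)) (by positivity)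
    nlinarith

/-- The lower bound for the dimension for every `l` with `w * η ^ l < η ^ (l + 1) - 1`. -/
lemma dimH_vhat_ge (b : ℕ) (hb : 2 ≤ b) (a : ℕ → ℕ) (ha : StrictMono a)
    (hpos : ∀ n, 1 ≤ a n) (η : ℝ) (hη1 : 1 < η)
    (hη : Tendsto (fun n => (a (n + 1) : ℝ) / (a n : ℝ)) atTop (nhds η))
    (w : ℝ) (hw : 0 < w) (l : ℕ) (hl : w * η ^ l < η ^ (l + 1) - 1) (s : ℝ) (hs : 0 < s)
    (hs' : s < (η ^ (l + 1) - 1 - w * η ^ l) / ((η ^ (l + 1) - 1) * (1 + w * η ^ l))) :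
    ENNReal.ofReal s ≤ dimH {ξ : ℝ | vhatbA b a ξ = (w : EReal)} := by
  classical
  obtain ⟨ε, hε, α, t, M, hM, hα, ht0, ht1, hp1, hp2, hp3⟩ :=
    exists_params (η ^ (l + 1)) (w * η ^ l) s (by positivity) hl hs'
  obtain ⟨n0, hn01, hn0⟩ := ((eventually_ge_atTop 1).and
    (eventually_forall_ge_atTop.mpr
      (eventually_growth a ha hpos η hη1 hη w l M hl ε hε))).exists
  have hsucc : ∀ k, n0 + (k + 1) * (l + 1) = n0 + k * (l + 1) + (l + 1) := fun k => by ring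
  set A := blockStart a n0 l with hAdef
  set E := blockEnd a w n0 l with hEdef
  have hceil : ∀ k, (E k : ℝ) < A k + w * a (n0 + k * (l + 1) + l) + 1 := by
    intro k
    have := Nat.ceil_lt_add_one (a := w * (a (n0 + k * (l + 1) + l) : ℝ)) (by positivity)
    simp only [hAdef, hEdef, blockStart, blockEnd]
    push_cast
    linarith
  have hgr := fun k => hn0 (n0 + k * (l + 1)) (by omega)
  have h3 : ∀ k, E k + M ≤ A (k + 1) := by
    intro k
    have h1 := (hgr k).2.2.1
    have h2 := hceil k
    have : ((E k + M : ℕ) : ℝ) ≤ A (k + 1) := by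
      simp only [hAdef, blockStart, hsucc] at h2 ⊢
      push_cast
      linarith
    exact_mod_cast this
  have h4 : ∀ n ≥ n0, a n + M ≤ a (n + 1) := by
    intro n hn
    have : ((a n + M : ℕ) : ℝ) ≤ a (n + 1) := by
      push_cast
      linarith [(hn0 n hn).2.2.2]
    exact_mod_cast this
  have hA : StrictMono A := strictMono_nat_of_lt_succ fun k => by
    simp only [hAdef, blockStart, hsucc]
    exact ha (by omega)
  have hE : Monotone E := fun i j hij => by
    simp only [hEdef, blockEnd]
    have h5 : a (n0 + i * (l + 1)) ≤ a (n0 + j * (l + 1)) := ha.monotone (by gcongr)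
    have h6 : a (n0 + i * (l + 1) + l) ≤ a (n0 + j * (l + 1) + l) := ha.monotone (by gcongr)
    gcongr
  have hAE : ∀ k, A k ≤ E k := fun k => by
    simp only [hAdef, hEdef, blockStart, blockEnd]
    omega
  have hcount : ∀ n : ℕ, s * n - 2 ≤ Nat.count (FreePos A E M) n := by
    intro n
    have h5 := count_inBlock_le A E hA hE (fun k => by have := h3 k; omega) hAE α
      (η ^ (l + 1) - ε) (w * η ^ l + ε) t hα ht1 ht0
      (fun k => by
        have h1 := (hgr k).1
        have h2 := hceil k
        simp only [hAdef, blockStart] at h2 ⊢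
        linarith)
      (fun k => by
        have h1 := (hgr k).2.1
        simpa only [hAdef, blockStart, hsucc] using h1) hp1 hp2 n
    have h6 := count_marker_le M n (by omega)
    have h7 : (n : ℝ) ≤ Nat.count (FreePos A E M) n + Nat.count (InBlock A E) n +
      Nat.count (fun i => i % M < 2) n := by exact_mod_cast count_freePos A E M n
    have h8 := mul_le_mul_of_nonneg_right hp3 (Nat.cast_nonneg (α := ℝ) n)
    nlinarith
  set d : ℕ → Fin b := fun i =>
    if ¬ InBlock A E i ∧ i % M = 1 then ⟨1, by omega⟩ else ⟨0, by omega⟩ with hd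
  have hd0 : ∀ i, i % M = 0 → (d i).val = 0 := fun i hi => by
    simp [hd, hi]
  have hfree0 : ∀ i, i % M = 0 → ¬ FreePos A E M i := fun i hi h => by
    have := h.2
    omega
  refine (dimH_prescribed hb (FreePos A E M) d M (fun j => ?_) s 2 hs hcount).trans
    (dimH_mono ?_)
  · obtain ⟨p, hp1, hp2, hp3⟩ := exists_mod_eq M 0 (j + 1) (by omega)
    exact ⟨p, by omega, by omega, hfree0 p hp3, by rw [hd0 p hp3]; omega⟩
  · rintro ξ ⟨x, hx, rfl⟩
    refine le_antisymm ?_ ?_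
    · refine vhatbA_le hb a ha w hw n0 l M hM h3 h4 x (fun i hi => ?_) (fun i hi hB => ?_)
      · rw [hx i (hfree0 i hi), hd0 i hi]
      · rw [hx i (fun h => by have := h.2; omega)]
        simp only [hd]
        rw [if_pos ⟨hB, hi⟩]
    · refine le_vhatbA hb a ha hpos w hw n0 l hn01 x (fun i hB => ?_)
      rw [hx i (fun h => h.1 hB)]
      simp only [hd]
      rw [if_neg (fun h => h.1 hB)]

theorem stmt12 (b : ℕ) (hb : 2 ≤ b) (a : ℕ → ℕ) (ha : StrictMono a)
    (hpos : ∀ n, 1 ≤ a n) (η : ℝ) (hη1 : 1 < η)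
    (hη : Tendsto (fun n => (a (n + 1) : ℝ) / (a n : ℝ)) atTop (nhds η))
    (w : ℝ) (hw : w ∈ Set.Ioo (0 : ℝ) η)
    (lt : ℤ) (hlt : lt = max 1 ⌊(Real.log (η + 1) - Real.log (η - w)) / Real.log η⌋) :
    ENNReal.ofReal ((η ^ (lt + 1) - 1 - η ^ lt * w) /
        ((η ^ (lt + 1) - 1) * (1 + η ^ lt * w))) ≤
      dimH {ξ : ℝ | vhatbA b a ξ = (w : EReal)} := by
  obtain ⟨hw0, hwη⟩ := hw
  obtain ⟨l, rfl⟩ := Int.eq_ofNat_of_zero_le (show 0 ≤ lt by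
    have := le_max_left 1 ⌊(Real.log (η + 1) - Real.log (η - w)) / Real.log η⌋
    omega)
  have hlog : 0 < Real.log η := Real.log_pos hη1
  have hηw : 0 < η - w := by linarith
  -- The choice of `l` gives `η ^ (l + 1) > (η + 1) / (η - w)`.
  have hbig : η + 1 < η ^ (l + 1) * (η - w) := by
    have h1 : (Real.log (η + 1) - Real.log (η - w)) / Real.log η < (l : ℝ) + 1 := by
      have h2 := Int.lt_floor_add_one ((Real.log (η + 1) - Real.log (η - w)) / Real.log η)
      have h3 := le_max_right 1 ⌊(Real.log (η + 1) - Real.log (η - w)) / Real.log η⌋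
      rw [← hlt] at h3
      have h4 : ((⌊(Real.log (η + 1) - Real.log (η - w)) / Real.log η⌋ : ℤ) : ℝ) ≤ (l : ℝ) := by
        exact_mod_cast h3
      linarith
    rw [div_lt_iff₀ hlog] at h1
    rw [← Real.log_lt_log_iff (by linarith) (by positivity), Real.log_mul (by positivity) hηw.ne',
      Real.log_pow]
    push_cast
    linarith
  have hl : w * η ^ l < η ^ (l + 1) - 1 := by
    rw [pow_succ] at hbig ⊢
    nlinarith
  have hz : (η : ℝ) ^ ((l : ℤ) + 1) = η ^ (l + 1) := by exact_mod_cast zpow_natCast η (l + 1)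
  rw [hz, zpow_natCast, mul_comm (η ^ l) w]
  refine ENNReal.le_of_forall_nnreal_lt fun s hs => ?_
  rcases eq_or_lt_of_le (show 0 ≤ s from s.2) with h0 | h0
  · rw [← h0]
    simp
  · have h1 := dimH_vhat_ge b hb a ha hpos η hη1 hη w hw0 l hl s (by exact_mod_cast h0) (by
      rw [ENNReal.lt_ofReal_iff_toReal_lt ENNReal.coe_ne_top] at hs
      simpa using hs)
    simpa using h1
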